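/- Let Z be a nonempty finite type, let q_θ be a probability vector on Z with full support, let A : Z → ℝ, let β > 0, η ≥ 0, and ε ≥ 0. For every probability vector q on Z with full support satisfying the trust-region constraint KL(q‖q_θ) ≤ ε, one has ∑_z q z · A z + β·H(q) ≤ (η+β) · log ∑_z exp((A z + η·log(q_θ z))/(η+β)) + η·ε. (Weak duality for the KL-constrained policy-search problem.) -/

import Mathlib

/-!
Put `λ = η + β` and `B = (A + η log q_θ) / λ`. Writing `log q_θ` in terms of the divergence gives
`⟨q, A⟩ + β H(q) = λ (⟨q, B⟩ + H(q)) + η KL(q‖q_θ)`, and the Gibbs variational identity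
`⟨q, B⟩ + H(q) = log ∑ exp B - KL(q‖softmax B)` rewrites the first term. Weak duality then amounts
to `KL(q‖softmax B) ≥ 0` and `KL(q‖q_θ) ≤ ε`.
-/

section GibbsVariational

open Finset Real

variable {ι : Type*} {s : Finset ι} {p q f : ι → ℝ}

/-- The Shannon entropy, in nats, of weights `p` on `s`; `Real.log 0 = 0` makes the terms with
`p i = 0` vanish. -/
noncomputable def shannonEntropy (s : Finset ι) (p : ι → ℝ) : ℝ :=
  -∑ i ∈ s, p i * log (p i)

/-- The Kullback-Leibler divergence `KL(p‖q)` of weights on `s`. It is real-valued, so it stands for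
the divergence only when `q i = 0` forces `p i = 0`: otherwise the true value is `+∞`, while
division by zero makes the offending terms vanish here. -/
noncomputable def relEntropy (s : Finset ι) (p q : ι → ℝ) : ℝ :=
  ∑ i ∈ s, p i * log (p i / q i)

/-- The log-partition function `log ∑ exp f` over `s`, with junk value `0` on the empty set. -/
noncomputable def logSumExp (s : Finset ι) (f : ι → ℝ) : ℝ :=
  log (∑ i ∈ s, exp (f i))

/-- The Gibbs distribution on `s`, with weights proportional to `exp f`. The normalization is put
inside the exponential, which makes its logarithm immediate. -/
noncomputable def softmax (s : Finset ι) (f : ι → ℝ) (i : ι) : ℝ :=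
  exp (f i - logSumExp s f)

theorem softmax_pos (s : Finset ι) (f : ι → ℝ) (i : ι) : 0 < softmax s f i :=
  exp_pos _

theorem log_softmax (s : Finset ι) (f : ι → ℝ) (i : ι) :
    log (softmax s f i) = f i - logSumExp s f :=
  log_exp _

theorem sum_softmax (hs : s.Nonempty) (f : ι → ℝ) : ∑ i ∈ s, softmax s f i = 1 := by
  have hpos : 0 < ∑ i ∈ s, exp (f i) := sum_pos (fun i _ => exp_pos (f i)) hs
  simp only [softmax, logSumExp, exp_sub, exp_log hpos]
  rw [← sum_div, div_self hpos.ne']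

theorem sub_le_mul_log_div {x y : ℝ} (hx : 0 ≤ x) (hy : 0 < y) : x - y ≤ x * log (x / y) := by
  have hkl : y * InformationTheory.klFun (x / y) = x * log (x / y) - (x - y) := by
    rw [InformationTheory.klFun_apply]
    field_simp
    ring
  rw [← sub_nonneg, ← hkl]
  exact mul_nonneg hy.le (InformationTheory.klFun_nonneg (div_nonneg hx hy.le))

theorem relEntropy_nonneg (hp : ∀ i ∈ s, 0 ≤ p i) (hq : ∀ i ∈ s, 0 < q i)
    (hqp : ∑ i ∈ s, q i ≤ ∑ i ∈ s, p i) : 0 ≤ relEntropy s p q :=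
  calc 0 ≤ ∑ i ∈ s, (p i - q i) := by rw [sum_sub_distrib]; exact sub_nonneg.2 hqp
    _ ≤ relEntropy s p q := sum_le_sum fun i hi => sub_le_mul_log_div (hp i hi) (hq i hi)

theorem relEntropy_eq_neg_sum_mul_log_sub_shannonEntropy (p : ι → ℝ) (hq : ∀ i ∈ s, q i ≠ 0) :
    relEntropy s p q = -∑ i ∈ s, p i * log (q i) - shannonEntropy s p := by
  have hterm : ∀ i ∈ s, p i * log (p i / q i) = p i * log (p i) - p i * log (q i) := by
    intro i hi
    obtain hpi | hpi := eq_or_ne (p i) 0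
    · simp [hpi]
    · rw [log_div hpi (hq i hi), mul_sub]
  rw [relEntropy, sum_congr rfl hterm, sum_sub_distrib, shannonEntropy]
  ring

theorem relEntropy_softmax (hp : ∑ i ∈ s, p i = 1) (f : ι → ℝ) :
    relEntropy s p (softmax s f) =
      logSumExp s f - (∑ i ∈ s, p i * f i + shannonEntropy s p) := by
  rw [relEntropy_eq_neg_sum_mul_log_sub_shannonEntropy p fun i _ => (softmax_pos s f i).ne']
  simp only [log_softmax, mul_sub, sum_sub_distrib, ← sum_mul, hp, one_mul]
  ring

theorem sum_mul_add_shannonEntropy_le_logSumExp (hp0 : ∀ i ∈ s, 0 ≤ p i)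
    (hp1 : ∑ i ∈ s, p i = 1) (f : ι → ℝ) :
    ∑ i ∈ s, p i * f i + shannonEntropy s p ≤ logSumExp s f := by
  have hs : s.Nonempty := nonempty_of_sum_ne_zero (hp1.trans_ne one_ne_zero)
  have hKL : 0 ≤ relEntropy s p (softmax s f) :=
    relEntropy_nonneg hp0 (fun i _ => softmax_pos s f i) ((sum_softmax hs f).trans hp1.symm).le
  rwa [relEntropy_softmax hp1, sub_nonneg] at hKL

theorem sum_mul_add_mul_shannonEntropy_eq {η β : ℝ} (hηβ : η + β ≠ 0) (p f : ι → ℝ)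
    (hq : ∀ i ∈ s, q i ≠ 0) :
    ∑ i ∈ s, p i * f i + β * shannonEntropy s p =
      (η + β) * (∑ i ∈ s, p i * ((f i + η * log (q i)) / (η + β)) + shannonEntropy s p) +
        η * relEntropy s p q := by
  have htilt : (η + β) * ∑ i ∈ s, p i * ((f i + η * log (q i)) / (η + β)) =
      ∑ i ∈ s, p i * f i + η * ∑ i ∈ s, p i * log (q i) := by
    simp only [mul_sum, ← sum_add_distrib]
    refine sum_congr rfl fun i _ => ?_
    field_simp
  rw [relEntropy_eq_neg_sum_mul_log_sub_shannonEntropy p hq, mul_add, htilt]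
  ring

theorem daps_weak_duality_general {η β ε : ℝ} (hη : 0 ≤ η) (hηβ : 0 < η + β)
    (hp0 : ∀ i ∈ s, 0 ≤ p i) (hp1 : ∑ i ∈ s, p i = 1) (hq : ∀ i ∈ s, 0 < q i)
    (hKL : relEntropy s p q ≤ ε) (f : ι → ℝ) :
    ∑ i ∈ s, p i * f i + β * shannonEntropy s p ≤
      (η + β) * logSumExp s (fun i => (f i + η * log (q i)) / (η + β)) + η * ε := by
  rw [sum_mul_add_mul_shannonEntropy_eq hηβ.ne' p f fun i hi => (hq i hi).ne']
  gcongr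
  exact sum_mul_add_shannonEntropy_le_logSumExp hp0 hp1 _

end GibbsVariational

/-- Weak duality for the KL-constrained policy-search problem.
For any full-support probability vector `q` with `KL(q‖q_θ) ≤ ε`,
`∑_z q z · A z + β·H(q) ≤ (η+β)·log ∑_z exp((A z + η·log(q_θ z))/(η+β)) + η·ε`. -/
theorem daps_weak_duality {Z : Type*} [Fintype Z] [Nonempty Z]
    (qθ : Z → ℝ) (hqθ0 : ∀ z, 0 < qθ z) (hqθ1 : ∑ z, qθ z = 1)
    (A : Z → ℝ) (β η ε : ℝ) (hβ : 0 < β) (hη : 0 ≤ η) (hε : 0 ≤ ε)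
    (q : Z → ℝ) (hq0 : ∀ z, 0 < q z) (hq1 : ∑ z, q z = 1)
    (hKL : ∑ z, q z * Real.log (q z / qθ z) ≤ ε) :
    (∑ z, q z * A z) + β * (-∑ z, q z * Real.log (q z))
      ≤ (η + β) * Real.log (∑ z, Real.exp ((A z + η * Real.log (qθ z)) / (η + β))) + η * ε :=
  daps_weak_duality_general hη (add_pos_of_nonneg_of_pos hη hβ) (fun z _ => (hq0 z).le) hq1
    (fun z _ => hqθ0 z) hKL A
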